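/- arXiv:1108.4859 — 2 statements merged into one kernel-verified Lean document; each statement's English description precedes it below -/
import Mathlib

section
/- Let μ > 0 and a, θ, v ∈ ℝ, write η = η(·; μ, a, θ, v), and define the symplectic pairing ω(f, g) = Im ∫_ℝ f conj(g) dx for complex-valued functions f, g on ℝ. Then the partial derivatives of η with respect to its parameters satisfy: ω(∂_θη, ∂_μη) = 1, ω(∂_vη, ∂_aη) = 1, and ω(∂_μη, ∂_aη) = ω(∂_μη, ∂_vη) = ω(∂_θη, ∂_aη) = ω(∂_θη, ∂_vη) = 0. In other words, the symplectic form of L²(ℝ, ℂ) restricted to the soliton manifold is dθ∧dμ + dv∧da. -/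
open Real MeasureTheory

/-- The soliton profile `η(x; μ, a, θ, v) = e^{iθ} e^{iμ⁻¹v(x-a)} μ sech(μ(x-a))`. -/
noncomputable def soliton (μ a θ v x : ℝ) : ℂ :=
  Complex.exp (Complex.I * (θ : ℂ)) * Complex.exp (Complex.I * (((v / μ) * (x - a) : ℝ) : ℂ)) *
    (μ : ℂ) * ((1 / Real.cosh (μ * (x - a)) : ℝ) : ℂ)

open Filter Topology

lemma cosh_bd (u : ℝ) : 1 + u ^ 2 / 2 ≤ Real.cosh u := by
  have h1 : Real.cosh u = 1 + 2 * Real.sinh (u / 2) ^ 2 := by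
    have h := Real.cosh_two_mul (u / 2)
    have h2 := Real.cosh_sq (u / 2)
    rw [show 2 * (u / 2) = u by ring] at h
    linarith
  have h3 : (u / 2) ^ 2 ≤ Real.sinh (u / 2) ^ 2 := by
    apply sq_le_sq.2
    rcases le_total 0 (u / 2) with h | h
    · rw [abs_of_nonneg h]
      exact (Real.self_le_sinh_iff.2 h).trans (le_abs_self _)
    · rw [abs_of_nonpos h]
      have := Real.sinh_le_self_iff.2 h
      have := neg_le_abs (Real.sinh (u / 2))
      linarith
  rw [h1]
  nlinarith

lemma abs_le_cosh' (u : ℝ) : |u| ≤ Real.cosh u := by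
  have := cosh_bd u
  rw [abs_le]
  constructor <;> nlinarith [sq_nonneg (u - 1), sq_nonneg (u + 1)]

lemma inv_cosh_bd (u : ℝ) : (Real.cosh u)⁻¹ ≤ 2 * (1 + u ^ 2)⁻¹ := by
  have := cosh_bd u
  rw [← div_eq_mul_inv, inv_eq_one_div, div_le_div_iff₀ (Real.cosh_pos u) (by positivity)]
  nlinarith

lemma tendsto_inv_bot : Tendsto (fun u : ℝ => 2 * (1 + u ^ 2)⁻¹) atBot (𝓝 0) := by
  have h : Tendsto (fun u : ℝ => 1 + u ^ 2) atBot atTop :=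
    tendsto_atTop_add_const_left _ _ (by simpa using (tendsto_pow_atTop (α := ℝ) (n := 2) (by norm_num)).comp tendsto_abs_atBot_atTop |>.congr (fun x => by simp))
  simpa using (h.inv_tendsto_atTop).const_mul 2

lemma tendsto_inv_top : Tendsto (fun u : ℝ => 2 * (1 + u ^ 2)⁻¹) atTop (𝓝 0) := by
  have h : Tendsto (fun u : ℝ => 1 + u ^ 2) atTop atTop :=
    tendsto_atTop_add_const_left _ _ (tendsto_pow_atTop (by norm_num))
  simpa using (h.inv_tendsto_atTop).const_mul 2

lemma bd1 (u : ℝ) : |(Real.cosh u)⁻¹ ^ 2| ≤ 2 * (1 + u ^ 2)⁻¹ := by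
  have h := inv_cosh_bd u
  have h0 : 0 < (Real.cosh u)⁻¹ := inv_pos.2 (Real.cosh_pos u)
  have h1 : (Real.cosh u)⁻¹ ≤ 1 := inv_le_one_of_one_le₀ (Real.one_le_cosh u)
  rw [abs_of_nonneg (by positivity)]
  nlinarith

lemma bd2 (u : ℝ) : |u * (Real.cosh u)⁻¹ ^ 2| ≤ 2 * (1 + u ^ 2)⁻¹ := by
  have h := inv_cosh_bd u
  have h0 : 0 < (Real.cosh u)⁻¹ := inv_pos.2 (Real.cosh_pos u)
  have h1 : |u| * (Real.cosh u)⁻¹ ≤ 1 := by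
    rw [← div_eq_mul_inv, div_le_one (Real.cosh_pos u)]
    exact abs_le_cosh' u
  rw [abs_mul, abs_of_nonneg (sq_nonneg (Real.cosh u)⁻¹)]
  nlinarith

lemma bd3 (u : ℝ) : |u * (Real.cosh u)⁻¹ ^ 2 * Real.tanh u| ≤ 2 * (1 + u ^ 2)⁻¹ := by
  rw [abs_mul]
  have := bd2 u
  have := Real.abs_tanh_lt_one u
  nlinarith [abs_nonneg (Real.tanh u), abs_nonneg (u * (Real.cosh u)⁻¹ ^ 2)]

lemma cont_inv : Continuous (fun u : ℝ => (Real.cosh u)⁻¹) :=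
  Real.continuous_cosh.inv₀ (fun u => (Real.cosh_pos u).ne')

lemma cont_tanh : Continuous (fun u : ℝ => Real.tanh u) := by
  simp only [Real.tanh_eq_sinh_div_cosh, div_eq_mul_inv]
  exact Real.continuous_sinh.mul cont_inv

lemma int_of_bd {f : ℝ → ℝ} (hf : Continuous f) (h : ∀ u, |f u| ≤ 2 * (1 + u ^ 2)⁻¹) :
    Integrable f :=
  (integrable_inv_one_add_sq.const_mul 2).mono' hf.aestronglyMeasurable
    (Eventually.of_forall h)

lemma int1 : Integrable (fun u : ℝ => (Real.cosh u)⁻¹ ^ 2) :=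
  int_of_bd (cont_inv.pow 2) bd1

lemma int2 : Integrable (fun u : ℝ => u * (Real.cosh u)⁻¹ ^ 2) :=
  int_of_bd (continuous_id.mul (cont_inv.pow 2)) bd2

lemma int3 : Integrable (fun u : ℝ => u * (Real.cosh u)⁻¹ ^ 2 * Real.tanh u) :=
  int_of_bd ((continuous_id.mul (cont_inv.pow 2)).mul cont_tanh) bd3

lemma tanh_top : Tendsto Real.tanh atTop (𝓝 1) := by
  have h : Tendsto (fun u : ℝ => 1 - Real.exp (-u) * (Real.cosh u)⁻¹) atTop (𝓝 (1 - 0 * 0)) := by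
    refine tendsto_const_nhds.sub (Tendsto.mul (Real.tendsto_exp_neg_atTop_nhds_zero) ?_)
    exact squeeze_zero (fun u => (inv_pos.2 (Real.cosh_pos u)).le) inv_cosh_bd tendsto_inv_top
  simp only [mul_zero, sub_zero] at h
  refine h.congr (fun u => ?_)
  have := (Real.cosh_pos u).ne'
  rw [Real.tanh_eq_sinh_div_cosh, ← Real.cosh_sub_sinh]
  field_simp
  ring

lemma tanh_bot : Tendsto Real.tanh atBot (𝓝 (-1)) := by
  have := (tanh_top.comp tendsto_neg_atBot_atTop).neg
  refine this.congr (fun u => ?_)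
  simp

lemma deriv_tanh' (u : ℝ) : HasDerivAt Real.tanh ((Real.cosh u)⁻¹ ^ 2) u := by
  have h := (Real.hasDerivAt_sinh u).div (Real.hasDerivAt_cosh u) (Real.cosh_pos u).ne'
  have e : Real.tanh = Real.sinh / Real.cosh := by
    funext x; exact Real.tanh_eq_sinh_div_cosh x
  rw [e]
  refine h.congr_deriv ?_
  have := (Real.cosh_pos u).ne'
  field_simp
  linarith [Real.cosh_sq u]

lemma deriv_invcosh (u : ℝ) :
    HasDerivAt (fun u => (Real.cosh u)⁻¹) (-((Real.cosh u)⁻¹ * Real.tanh u)) u := by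
  have h := (Real.hasDerivAt_cosh u).inv (Real.cosh_pos u).ne'
  refine HasDerivAt.congr_deriv (f := fun u => (Real.cosh u)⁻¹) h ?_
  have := (Real.cosh_pos u).ne'
  rw [Real.tanh_eq_sinh_div_cosh]
  field_simp

lemma I1 : ∫ u : ℝ, (Real.cosh u)⁻¹ ^ 2 = 2 := by
  rw [integral_of_hasDerivAt_of_tendsto deriv_tanh' int1 tanh_bot tanh_top]
  norm_num

lemma I3 : ∫ u : ℝ, u * (Real.cosh u)⁻¹ ^ 2 * Real.tanh u = 1 := by
  have hd : ∀ u : ℝ, HasDerivAt (fun u => Real.tanh u / 2 - u * (Real.cosh u)⁻¹ ^ 2 / 2)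
      (u * (Real.cosh u)⁻¹ ^ 2 * Real.tanh u) u := by
    intro u
    refine HasDerivAt.congr_deriv (((deriv_tanh' u).div_const 2).sub
      (((hasDerivAt_id u).mul ((deriv_invcosh u).pow 2)).div_const 2)) ?_
    simp only [id, Pi.pow_apply]
    push_cast
    ring
  have hb := (tanh_bot.div_const 2).sub
    ((squeeze_zero_norm bd2 tendsto_inv_bot).div_const 2)
  have ht := (tanh_top.div_const 2).sub
    ((squeeze_zero_norm bd2 tendsto_inv_top).div_const 2)
  rw [integral_of_hasDerivAt_of_tendsto hd int3 hb ht]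
  norm_num

lemma odd_int {f : ℝ → ℝ} (h : ∀ u, f (-u) = - f u) : ∫ u, f u = 0 := by
  have := integral_neg_eq_self f volume
  simp only [h, integral_neg] at this
  linarith

lemma int_scale (k a : ℝ) {μ : ℝ} (hμ : 0 < μ) {f : ℝ → ℝ} (hf : Integrable f) :
    Integrable (fun x => k * f (μ * (x - a))) :=
  ((hf.comp_mul_left' hμ.ne').comp_sub_right a).const_mul k

lemma integral_scale (k a : ℝ) {μ : ℝ} (hμ : 0 < μ) (f : ℝ → ℝ) :
    ∫ x, k * f (μ * (x - a)) = k * (μ⁻¹ * ∫ u, f u) := by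
  rw [integral_const_mul, integral_sub_right_eq_self (fun x => f (μ * x)) a,
    Measure.integral_comp_mul_left, abs_of_pos (inv_pos.2 hμ), smul_eq_mul]

lemma pair_im {h : ℝ → ℂ} (R J : ℝ → ℝ) (e : ∀ x, h x = (R x : ℂ) + (J x : ℂ) * Complex.I)
    (hR : Integrable R) (hJ : Integrable J) : (∫ x, h x).im = ∫ x, J x := by
  have hh : Integrable h := by
    rw [funext e]
    exact hR.ofReal.add (hJ.ofReal.mul_const _)
  have := integral_im hh
  simp only [RCLike.im_to_complex] at this
  rw [← this]
  simp [e]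

lemma pair_im0 {h : ℝ → ℂ} (J : ℝ → ℝ) (e : ∀ x, (h x).im = J x)
    (hJ : ∫ x, J x = 0) : (∫ x, h x).im = 0 := by
  by_cases hh : Integrable h
  · have := integral_im hh
    simp only [RCLike.im_to_complex] at this
    rw [← this, ← hJ]
    simp [e]
  · rw [integral_undef hh]; simp

lemma pair_scale {h : ℝ → ℂ} (k l a : ℝ) {μ : ℝ} (hμ : 0 < μ) (R J : ℝ → ℝ)
    (hR : Integrable R) (hJ : Integrable J)
    (e : ∀ x, h x = ((k * R (μ * (x - a)) : ℝ) : ℂ) + ((l * J (μ * (x - a)) : ℝ) : ℂ) * Complex.I) :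
    (∫ x, h x).im = l * (μ⁻¹ * ∫ u, J u) := by
  rw [pair_im _ _ e (int_scale _ _ hμ hR) (int_scale _ _ hμ hJ), integral_scale _ _ hμ]

lemma pair_scale0 {h : ℝ → ℂ} (l a : ℝ) {μ : ℝ} (hμ : 0 < μ) (J : ℝ → ℝ)
    (e : ∀ x, (h x).im = l * J (μ * (x - a))) (hJ : ∫ u, J u = 0) :
    (∫ x, h x).im = 0 :=
  pair_im0 _ e (by rw [integral_scale _ _ hμ, hJ]; simp)

/-- The phase. -/
noncomputable def phase (μ a θ v x : ℝ) : ℂ :=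
  Complex.exp (Complex.I * (θ : ℂ)) * Complex.exp (Complex.I * (((v / μ) * (x - a) : ℝ) : ℂ))

lemma phase_conj (μ a θ v x : ℝ) :
    phase μ a θ v x * (starRingEnd ℂ) (phase μ a θ v x) = 1 := by
  rw [Complex.mul_conj, Complex.normSq_eq_norm_sq, phase, norm_mul,
    mul_comm Complex.I, mul_comm Complex.I, Complex.norm_exp_ofReal_mul_I,
    Complex.norm_exp_ofReal_mul_I]
  simp

lemma phase_pair (μ a θ v x p q r s : ℝ) :
    (phase μ a θ v x * (p + q * Complex.I)) *
      (starRingEnd ℂ) (phase μ a θ v x * (r + s * Complex.I)) =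
      ((p * r + q * s : ℝ) : ℂ) + ((q * r - p * s : ℝ) : ℂ) * Complex.I := by
  have h := phase_conj μ a θ v x
  simp only [map_mul, map_add, Complex.conj_ofReal, Complex.conj_I]
  push_cast
  linear_combination (p + q * Complex.I) * (r - s * Complex.I) * h - q * s * Complex.I_sq

/-- General derivative of a curve `exp(iα) exp(iβ) m c`. -/
lemma gen_deriv {α β m c : ℝ → ℝ} {α' β' m' c' t : ℝ} (hα : HasDerivAt α α' t)
    (hβ : HasDerivAt β β' t) (hm : HasDerivAt m m' t) (hc : HasDerivAt c c' t) :
    deriv (fun t => Complex.exp (Complex.I * (α t : ℂ)) * Complex.exp (Complex.I * (β t : ℂ)) *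
      (m t : ℂ) * (c t : ℂ)) t =
    (Complex.exp (Complex.I * (α t : ℂ)) * Complex.exp (Complex.I * (β t : ℂ))) *
      (((m' * c t + m t * c' : ℝ) : ℂ) + (((α' + β') * m t * c t : ℝ) : ℂ) * Complex.I) := by
  have h := ((((hα.ofReal_comp.const_mul Complex.I).cexp).mul
    ((hβ.ofReal_comp.const_mul Complex.I).cexp)).mul hm.ofReal_comp).mul hc.ofReal_comp
  refine (HasDerivAt.deriv h).trans ?_
  simp only [Pi.mul_apply]
  push_cast
  ring

lemma dθ (μ a θ v x : ℝ) : deriv (fun p : ℝ => soliton μ a p v x) θ =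
    phase μ a θ v x * (((0 : ℝ) : ℂ) + ((μ * (Real.cosh (μ * (x - a)))⁻¹ : ℝ) : ℂ) * Complex.I) := by
  refine (gen_deriv (hasDerivAt_id θ) (hasDerivAt_const θ (v / μ * (x - a)))
    (hasDerivAt_const θ μ) (hasDerivAt_const θ (1 / Real.cosh (μ * (x - a))))).trans ?_
  simp [phase]

lemma dv (μ a θ v x : ℝ) (hμ : 0 < μ) : deriv (fun w : ℝ => soliton μ a θ w x) v =
    phase μ a θ v x *
      (((0 : ℝ) : ℂ) + (((x - a) * (Real.cosh (μ * (x - a)))⁻¹ : ℝ) : ℂ) * Complex.I) := by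
  refine (gen_deriv (hasDerivAt_const v θ) (((hasDerivAt_id v).div_const μ).mul_const (x - a))
    (hasDerivAt_const v μ) (hasDerivAt_const v (1 / Real.cosh (μ * (x - a))))).trans ?_
  unfold phase
  congr 4
  · simp
  · have := (Real.cosh_pos (μ * (x - a))).ne'
    field_simp
    ring

lemma da (μ a θ v x : ℝ) (hμ : 0 < μ) : deriv (fun b : ℝ => soliton μ b θ v x) a =
    phase μ a θ v x *
      (((μ ^ 2 * (Real.cosh (μ * (x - a)))⁻¹ * Real.tanh (μ * (x - a)) : ℝ) : ℂ) +
        ((-v * (Real.cosh (μ * (x - a)))⁻¹ : ℝ) : ℂ) * Complex.I) := by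
  have hl : HasDerivAt (fun b : ℝ => x - b) (-1) a := (hasDerivAt_id a).const_sub x
  have hc : HasDerivAt (fun b : ℝ => 1 / Real.cosh (μ * (x - b)))
      (-((Real.cosh (μ * (x - a)))⁻¹ * Real.tanh (μ * (x - a))) * (μ * -1)) a := by
    simp only [one_div]
    exact HasDerivAt.comp (h₂ := fun u => (Real.cosh u)⁻¹) (h := fun b => μ * (x - b)) a
      (deriv_invcosh (μ * (x - a))) (hl.const_mul μ)
  refine (gen_deriv (hasDerivAt_const a θ) (hl.const_mul (v / μ))
    (hasDerivAt_const a μ) hc).trans ?_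
  unfold phase
  congr 4
  · ring
  · have := (Real.cosh_pos (μ * (x - a))).ne'
    field_simp
    ring

lemma dμ (μ a θ v x : ℝ) (hμ : 0 < μ) : deriv (fun m : ℝ => soliton m a θ v x) μ =
    phase μ a θ v x *
      ((((Real.cosh (μ * (x - a)))⁻¹ -
          μ * (x - a) * (Real.cosh (μ * (x - a)))⁻¹ * Real.tanh (μ * (x - a)) : ℝ) : ℂ) +
        ((-(v / μ) * (x - a) * (Real.cosh (μ * (x - a)))⁻¹ : ℝ) : ℂ) * Complex.I) := by
  have hc : HasDerivAt (fun m : ℝ => 1 / Real.cosh (m * (x - a)))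
      (-((Real.cosh (μ * (x - a)))⁻¹ * Real.tanh (μ * (x - a))) * (1 * (x - a))) μ := by
    simp only [one_div]
    exact HasDerivAt.comp (h₂ := fun u => (Real.cosh u)⁻¹) (h := fun m => m * (x - a)) μ
      (deriv_invcosh (μ * (x - a))) ((hasDerivAt_id μ).mul_const (x - a))
  have hb : HasDerivAt (fun m : ℝ => v / m * (x - a)) (v * (-(μ ^ 2)⁻¹) * (x - a)) μ := by
    simp only [div_eq_mul_inv]
    exact ((hasDerivAt_inv hμ.ne').const_mul v).mul_const (x - a)
  refine (gen_deriv (hasDerivAt_const μ θ) hb (hasDerivAt_id μ) hc).trans ?_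
  unfold phase
  congr 2
  · congr 1
    simp only [id]
    ring
  · congr 2
    have := (Real.cosh_pos (μ * (x - a))).ne'
    simp only [id]
    field_simp
    ring

/-- The restriction of the symplectic form `ω(f,g) = Im ∫ f conj(g)` of `L²(ℝ,ℂ)` to the
soliton manifold is `dθ∧dμ + dv∧da`: the parameter-derivatives of `η` satisfy
`ω(∂_θη, ∂_μη) = 1`, `ω(∂_vη, ∂_aη) = 1` and the other pairings vanish. -/
theorem soliton_symplectic_form (μ a θ v : ℝ) (hμ : 0 < μ) :
    let ημ : ℝ → ℂ := fun x => deriv (fun m : ℝ => soliton m a θ v x) μ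
    let ηa : ℝ → ℂ := fun x => deriv (fun b : ℝ => soliton μ b θ v x) a
    let ηθ : ℝ → ℂ := fun x => deriv (fun p : ℝ => soliton μ a p v x) θ
    let ηv : ℝ → ℂ := fun x => deriv (fun w : ℝ => soliton μ a θ w x) v
    let ω : (ℝ → ℂ) → (ℝ → ℂ) → ℝ := fun f g => (∫ x : ℝ, f x * (starRingEnd ℂ) (g x)).im
    ω ηθ ημ = 1 ∧ ω ηv ηa = 1 ∧
      ω ημ ηa = 0 ∧ ω ημ ηv = 0 ∧ ω ηθ ηa = 0 ∧ ω ηθ ηv = 0 := by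
  intro ημ ηa ηθ ηv ω
  have hμ0 := hμ.ne'
  have eθ : ηθ = _ := funext fun x => dθ μ a θ v x
  have ev : ηv = _ := funext fun x => dv μ a θ v x hμ
  have ea : ηa = _ := funext fun x => da μ a θ v x hμ
  have em : ημ = _ := funext fun x => dμ μ a θ v x hμ
  simp only [ω, eθ, ev, ea, em, phase_pair]
  refine ⟨?_, ?_, ?_, ?_, ?_, ?_⟩
  · rw [pair_scale (-(v / μ)) μ a hμ (fun u => u * (Real.cosh u)⁻¹ ^ 2)
      (fun u => (Real.cosh u)⁻¹ ^ 2 - u * (Real.cosh u)⁻¹ ^ 2 * Real.tanh u) int2 (int1.sub int3)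
      ?_, integral_sub int1 int3, I1, I3]
    · field_simp; norm_num
    · intro x
      congr 3
      · field_simp
        ring
      · ring
  · rw [pair_scale (-(v / μ)) μ a hμ (fun u => u * (Real.cosh u)⁻¹ ^ 2)
      (fun u => u * (Real.cosh u)⁻¹ ^ 2 * Real.tanh u) int2 int3 ?_, I3]
    · field_simp
    · intro x
      congr 3
      · field_simp
        ring
      · ring
  · refine pair_scale0 v a hμ (fun u => (Real.cosh u)⁻¹ ^ 2 -
      2 * (u * (Real.cosh u)⁻¹ ^ 2 * Real.tanh u)) ?_ ?_
    · intro x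
      simp only [Complex.add_im, Complex.ofReal_im, Complex.im_ofReal_mul, Complex.I_im]
      field_simp
      ring
    · rw [integral_sub int1 (int3.const_mul 2), integral_const_mul, I1, I3]
      norm_num
  · refine pair_scale0 (-μ⁻¹) a hμ (fun u => u * (Real.cosh u)⁻¹ ^ 2 -
      u ^ 2 * (Real.cosh u)⁻¹ ^ 2 * Real.tanh u) ?_ (odd_int ?_)
    · intro x
      simp only [Complex.add_im, Complex.ofReal_im, Complex.im_ofReal_mul, Complex.I_im]
      field_simp
      ring
    · intro u; simp only [Real.cosh_neg, Real.tanh_neg]; ring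
  · refine pair_scale0 (μ ^ 3) a hμ (fun u => (Real.cosh u)⁻¹ ^ 2 * Real.tanh u) ?_ (odd_int ?_)
    · intro x
      simp only [Complex.add_im, Complex.ofReal_im, Complex.im_ofReal_mul, Complex.I_im]
      ring
    · intro u; simp only [Real.cosh_neg, Real.tanh_neg]; ring
  · refine pair_im0 (fun x => 0) ?_ (by simp)
    intro x
    simp only [Complex.add_im, Complex.ofReal_im, Complex.im_ofReal_mul, Complex.I_im]
    ring
end

section
/- Let ψ : ℝ → ℝ be smooth with all derivatives bounded, and let u : ℝ → ℂ be a Schwartz function. Then the Poisson bracket of the NLS energy with the localized momentum P_ψ(u) = (1/2) Im ∫_ℝ ψ conj(u) u' dx satisfies the identity Re ∫_ℝ ( -i(ψ u' + (1/2)ψ' u) ) · conj( i( (1/2)u'' + |u|²u ) ) dx = ∫_ℝ ψ' ( (1/2)|u'|² - (1/4)|u|⁴ ) dx - (1/8) ∫_ℝ ψ''' |u|² dx. (The left side is ⟨P_ψ'(u), JH'(u)⟩, where P_ψ'(u) = -i(ψu' + (1/2)ψ'u) and JH'(u) = i((1/2)u'' + |u|²u) is the NLS vector field.) -/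
open Real MeasureTheory

/-- Continuous bounded functions. -/
def PBBdd {R : Type*} [NormedRing R] (f : ℝ → R) : Prop :=
  Continuous f ∧ ∃ C : ℝ, ∀ x, ‖f x‖ ≤ C

/-- Continuous bounded integrable functions. -/
def PBGood {R : Type*} [NormedRing R] (f : ℝ → R) : Prop :=
  PBBdd f ∧ Integrable f

theorem PBGood.bmul {R : Type*} [NormedRing R] {p f : ℝ → R} (hp : PBBdd p) (hf : PBGood f) :
    PBGood (fun x => p x * f x) := by
  obtain ⟨hpc, C, hC⟩ := hp
  obtain ⟨⟨hfc, D, hD⟩, hfi⟩ := hf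
  refine ⟨⟨hpc.mul hfc, C * D, fun x => ?_⟩, ?_⟩
  · exact (norm_mul_le _ _).trans (mul_le_mul (hC x) (hD x) (norm_nonneg _)
      ((norm_nonneg _).trans (hC x)))
  · exact hfi.bdd_mul hpc.aestronglyMeasurable (Filter.Eventually.of_forall hC)

theorem PBGood.mul {R : Type*} [NormedRing R] {p f : ℝ → R} (hp : PBGood p) (hf : PBGood f) :
    PBGood (fun x => p x * f x) := PBGood.bmul hp.1 hf

theorem PBGood.cmul {R : Type*} [NormedRing R] (c : R) {f : ℝ → R} (hf : PBGood f) :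
    PBGood (fun x => c * f x) :=
  PBGood.bmul ⟨continuous_const, ‖c‖, fun _ => le_rfl⟩ hf

theorem PBGood.add {R : Type*} [NormedRing R] {p f : ℝ → R} (hp : PBGood p) (hf : PBGood f) :
    PBGood (fun x => p x + f x) := by
  obtain ⟨⟨hpc, C, hC⟩, hpi⟩ := hp
  obtain ⟨⟨hfc, D, hD⟩, hfi⟩ := hf
  exact ⟨⟨hpc.add hfc, C + D, fun x => (norm_add_le _ _).trans (add_le_add (hC x) (hD x))⟩,
    hpi.add hfi⟩

theorem PBGood.sub {R : Type*} [NormedRing R] {p f : ℝ → R} (hp : PBGood p) (hf : PBGood f) :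
    PBGood (fun x => p x - f x) := by
  simpa [sub_eq_add_neg] using hp.add (hf.cmul (-1))

theorem PBGood.conj {f : ℝ → ℂ} (hf : PBGood f) :
    PBGood (fun x => (starRingEnd ℂ) (f x)) := by
  obtain ⟨⟨hfc, D, hD⟩, hfi⟩ := hf
  have hc : Continuous (fun x => (starRingEnd ℂ) (f x)) := Complex.continuous_conj.comp hfc
  exact ⟨⟨hc, D, fun x => by simpa using hD x⟩,
    hfi.mono hc.aestronglyMeasurable (Filter.Eventually.of_forall fun x => by simp)⟩

theorem PBGood.re {f : ℝ → ℂ} (hf : PBGood f) : PBGood (fun x => (f x).re) := by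
  obtain ⟨⟨hfc, D, hD⟩, hfi⟩ := hf
  exact ⟨⟨Complex.continuous_re.comp hfc, D, fun x => (Complex.abs_re_le_norm _).trans (hD x)⟩,
    hfi.re⟩

theorem PBGood.im {f : ℝ → ℂ} (hf : PBGood f) : PBGood (fun x => (f x).im) := by
  obtain ⟨⟨hfc, D, hD⟩, hfi⟩ := hf
  exact ⟨⟨Complex.continuous_im.comp hfc, D, fun x => (Complex.abs_im_le_norm _).trans (hD x)⟩,
    hfi.im⟩

theorem PBBdd.ofReal {f : ℝ → ℝ} (hf : PBBdd f) : PBBdd (fun x => (f x : ℂ)) := by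
  obtain ⟨hfc, D, hD⟩ := hf
  exact ⟨Complex.continuous_ofReal.comp hfc, D, fun x => by simpa using hD x⟩

theorem PBGood.schwartz (u : SchwartzMap ℝ ℂ) : PBGood (⇑u) := by
  refine ⟨⟨u.continuous, ?_⟩, u.integrable⟩
  obtain ⟨C, -, hC⟩ := u.decay 0 0
  exact ⟨C, fun x => by simpa using hC x⟩

theorem poisson_norm_sq (z : ℂ) : ‖z‖ ^ 2 = z.re * z.re + z.im * z.im := by
  rw [Complex.sq_norm, Complex.normSq_apply]

theorem poisson_norm_four (z : ℂ) : ‖z‖ ^ 4 = (z.re * z.re + z.im * z.im) ^ 2 := by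
  rw [← poisson_norm_sq]; ring

theorem poisson_hasDerivAt_re {f : ℝ → ℂ} {f' : ℂ} {x : ℝ} (h : HasDerivAt f f' x) :
    HasDerivAt (fun y => (f y).re) f'.re x :=
  Complex.reCLM.hasFDerivAt.comp_hasDerivAt x h

theorem poisson_hasDerivAt_im {f : ℝ → ℂ} {f' : ℂ} {x : ℝ} (h : HasDerivAt f f' x) :
    HasDerivAt (fun y => (f y).im) f'.im x :=
  Complex.imCLM.hasFDerivAt.comp_hasDerivAt x h

/-- Poisson bracket of the NLS Hamiltonian with the localized momentum
`P_ψ(u) = (1/2) Im ∫ ψ conj(u) u'`: for a smooth weight `ψ` with bounded derivatives and `u`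
Schwartz, `⟨P_ψ'(u), JH'(u)⟩ = ∫ψ'((1/2)|u'|² - (1/4)|u|⁴) - (1/8)∫ψ'''|u|²`. -/
theorem poisson_bracket_localized_momentum (ψ : ℝ → ℝ)
    (hψ : ContDiff ℝ (⊤ : ℕ∞) ψ)
    (hψb : ∀ n : ℕ, ∃ C : ℝ, ∀ x : ℝ, |iteratedDeriv n ψ x| ≤ C)
    (u : SchwartzMap ℝ ℂ) :
    (∫ x : ℝ, (-Complex.I * ((ψ x : ℂ) * deriv (⇑u) x + (1 / 2) * ((deriv ψ x : ℝ) : ℂ) * u x)) *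
        (starRingEnd ℂ) (Complex.I * ((1 / 2) * deriv (deriv (⇑u)) x
          + (‖u x‖ : ℂ) ^ 2 * u x))).re
      = (∫ x : ℝ, deriv ψ x * ((1 / 2) * ‖deriv (⇑u) x‖ ^ 2 - (1 / 4) * ‖u x‖ ^ 4))
        - (1 / 8) * ∫ x : ℝ, iteratedDeriv 3 ψ x * ‖u x‖ ^ 2 := by
  have hB : ∀ n : ℕ, PBBdd (iteratedDeriv n ψ) := fun n =>
    ⟨hψ.continuous_iteratedDeriv n (by exact_mod_cast le_top), hψb n⟩
  have hD : ∀ (n : ℕ) (x : ℝ),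
      HasDerivAt (iteratedDeriv n ψ) (iteratedDeriv (n + 1) ψ x) x := fun n x => by
    rw [iteratedDeriv_succ]
    exact (hψ.differentiable_iteratedDeriv n
      (by exact_mod_cast WithTop.coe_lt_top n) x).hasDerivAt
  have e0 : ψ = iteratedDeriv 0 ψ := by simp
  have e1 : deriv ψ = iteratedDeriv 1 ψ := by simp
  have hu1 : deriv (⇑u) = ⇑(SchwartzMap.derivCLM ℝ ℂ u) := by
    ext x; simp
  have hu2 : deriv (deriv (⇑u)) =
      ⇑(SchwartzMap.derivCLM ℝ ℂ (SchwartzMap.derivCLM ℝ ℂ u)) := by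
    rw [hu1]; ext x; simp
  have gu := PBGood.schwartz u
  have gv : PBGood (deriv (⇑u)) := by rw [hu1]; exact PBGood.schwartz _
  have gw : PBGood (deriv (deriv (⇑u))) := by rw [hu2]; exact PBGood.schwartz _
  have du : ∀ x, HasDerivAt (⇑u) (deriv (⇑u) x) x := fun x => (u.differentiableAt).hasDerivAt
  have dv : ∀ x, HasDerivAt (deriv (⇑u)) (deriv (deriv (⇑u)) x) x := fun x => by
    have : DifferentiableAt ℝ (deriv (⇑u)) x := by
      rw [hu1]; exact SchwartzMap.differentiableAt _
    exact this.hasDerivAt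
  have b0 : PBBdd ψ := by rw [e0]; exact hB 0
  have b1 : PBBdd (deriv ψ) := by rw [e1]; exact hB 1
  have b2 := hB 2
  have b3 := hB 3
  have d0 : ∀ x, HasDerivAt ψ (deriv ψ x) x := fun x => by
    have := hD 0 x
    simpa using this
  have d1 : ∀ x, HasDerivAt (deriv ψ) (iteratedDeriv 2 ψ x) x := fun x => by
    have := hD 1 x
    rwa [← e1] at this
  have d2 : ∀ x, HasDerivAt (iteratedDeriv 2 ψ) (iteratedDeriv 3 ψ x) x := hD 2
  generalize iteratedDeriv 3 ψ = p3 at *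
  generalize iteratedDeriv 2 ψ = p2 at *
  generalize deriv ψ = p1 at *
  generalize deriv (deriv (⇑u)) = w at *
  generalize deriv (⇑u) = v at *
  generalize (⇑u) = u at *
  have gn2 : PBGood (fun x => ‖u x‖ ^ 2) := by
    simp only [poisson_norm_sq]
    exact (gu.re.mul gu.re).add (gu.im.mul gu.im)
  have gm2 : PBGood (fun x => ‖v x‖ ^ 2) := by
    simp only [poisson_norm_sq]
    exact (gv.re.mul gv.re).add (gv.im.mul gv.im)
  have gn4 : PBGood (fun x => ‖u x‖ ^ 4) := by
    have : (fun x => ‖u x‖ ^ 4) = fun x => ‖u x‖ ^ 2 * ‖u x‖ ^ 2 := by ext x; ring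
    rw [this]; exact gn2.mul gn2
  have gL : PBGood (fun x : ℝ => (-Complex.I * ((ψ x : ℂ) * v x + (1 / 2) * ((p1 x : ℝ) : ℂ) * u x)) *
        (starRingEnd ℂ) (Complex.I * ((1 / 2) * w x + (‖u x‖ : ℂ) ^ 2 * u x))) := by
    have h1 : PBGood (fun x : ℝ => (1 / 2) * ((p1 x : ℝ) : ℂ) * u x) := by
      simp only [mul_assoc]
      exact (PBGood.bmul b1.ofReal gu).cmul _
    have h2 : PBGood (fun x : ℝ => (‖u x‖ : ℂ) ^ 2 * u x) := by
      have := PBGood.bmul gn2.1.ofReal gu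
      simpa only [Complex.ofReal_pow] using this
    exact (((PBGood.bmul b0.ofReal gv).add h1).cmul _).mul (((gw.cmul _).add h2).cmul _).conj
  have gR1 : PBGood (fun x => p1 x * ((1 / 2) * ‖v x‖ ^ 2 - (1 / 4) * ‖u x‖ ^ 4)) :=
    PBGood.bmul b1 ((gm2.cmul _).sub (gn4.cmul _))
  have gR2 : PBGood (fun x => p3 x * ‖u x‖ ^ 2) := PBGood.bmul b3 gn2
  have gF : PBGood (fun x => (-(1/4)) * (ψ x * ((v x).re * (v x).re + (v x).im * (v x).im))
      + (-(1/4)) * (ψ x * (((u x).re * (u x).re + (u x).im * (u x).im) *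
          ((u x).re * (u x).re + (u x).im * (u x).im)))
      + (-(1/4)) * (p1 x * ((u x).re * (v x).re + (u x).im * (v x).im))
      + (1/8) * (p2 x * ((u x).re * (u x).re + (u x).im * (u x).im))) := by
    have hN := (gu.re.mul gu.re).add (gu.im.mul gu.im)
    exact ((((PBGood.bmul b0 ((gv.re.mul gv.re).add (gv.im.mul gv.im))).cmul _).add
      ((PBGood.bmul b0 (hN.mul hN)).cmul _)).add
      ((PBGood.bmul b1 ((gu.re.mul gv.re).add (gu.im.mul gv.im))).cmul _)).add
      ((PBGood.bmul b2 hN).cmul _)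
  have gF' := (gL.re.sub gR1).add (gR2.cmul (1 / 8))
  have key := integral_eq_zero_of_hasDerivAt_of_integrable (fun x => ?_) gF'.2 gF.2
  · have hre : (∫ x : ℝ, (-Complex.I * ((ψ x : ℂ) * v x + (1 / 2) * ((p1 x : ℝ) : ℂ) * u x)) *
        (starRingEnd ℂ) (Complex.I * ((1 / 2) * w x + (‖u x‖ : ℂ) ^ 2 * u x))).re = _ :=
      (integral_re gL.2).symm
    rw [hre]
    rw [integral_add (gL.re.sub gR1).2 (gR2.cmul (1 / 8)).2, integral_sub gL.re.2 gR1.2,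
      integral_const_mul] at key
    simp only [RCLike.re_eq_complex_re] at key ⊢
    linarith
  · have ur := poisson_hasDerivAt_re (du x)
    have ui := poisson_hasDerivAt_im (du x)
    have vr := poisson_hasDerivAt_re (dv x)
    have vi := poisson_hasDerivAt_im (dv x)
    have hN := (ur.mul ur).add (ui.mul ui)
    have := ((((((d0 x).mul ((vr.mul vr).add (vi.mul vi))).const_mul (-(1/4))).add
      (((d0 x).mul (hN.mul hN)).const_mul (-(1/4)))).add
      (((d1 x).mul ((ur.mul vr).add (ui.mul vi))).const_mul (-(1/4)))).add
      (((d2 x).mul hN).const_mul (1/8)))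
    refine HasDerivAt.congr_deriv this ?_
    rw [poisson_norm_sq, poisson_norm_four, ← Complex.ofReal_pow, poisson_norm_sq]
    simp [-Complex.ofReal_add, -Complex.ofReal_mul]
    ring
end
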